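/- For every integer r ≥ 2, the group 𝒫 = ⟨u, o | u o u⁻¹ = o^r⟩ embeds into the solution group Γ of a binary linear system with 16r+75 variables and 14r+62 equations (each equation containing 3 variables): there exists an injective group homomorphism 𝒫 → Γ mapping u to a₃a₄ and o to a₁a₂. -/

import Mathlib

/-- The generators `o₁, …, o_r, u₁, …, u₅` of the group `𝒫₀`. -/
inductive P0Gen (r : ℕ) : Type
  | o : Fin r → P0Gen r
  | u : Fin 5 → P0Gen r

/-- The free-group letter `o_k` (`1 ≤ k ≤ r`; junk value `1` out of range). -/
def oW (r : ℕ) (k : ℕ) : FreeGroup (P0Gen r) :=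
  if h : 1 ≤ k ∧ k ≤ r then FreeGroup.of (P0Gen.o ⟨k - 1, by omega⟩) else 1

/-- The free-group letter `u_k` (`1 ≤ k ≤ 5`; junk value `1` out of range). -/
def uW (r : ℕ) (k : ℕ) : FreeGroup (P0Gen r) :=
  if h : 1 ≤ k ∧ k ≤ 5 then FreeGroup.of (P0Gen.u ⟨k - 1, by omega⟩) else 1

/-- The relations `s² = e` for every generator `s` of `𝒫₀`. -/
def P0RelsSq (r : ℕ) : Set (FreeGroup (P0Gen r)) :=
  Set.range fun g : P0Gen r => FreeGroup.of g * FreeGroup.of g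

/-- The relations `u₃ = u₂o₁u₂`, `u₄ = u₂o₂u₂`, `u₅ = u₁u₃u₁`, `o₂ = u₁u₄u₁`,
`u₅ = o₁o_r o₁` of `𝒫₀`. -/
def P0RelsU (r : ℕ) : Set (FreeGroup (P0Gen r)) :=
  { uW r 2 * oW r 1 * uW r 2 * (uW r 3)⁻¹,
    uW r 2 * oW r 2 * uW r 2 * (uW r 4)⁻¹,
    uW r 1 * uW r 3 * uW r 1 * (uW r 5)⁻¹,
    uW r 1 * uW r 4 * uW r 1 * (oW r 2)⁻¹,
    oW r 1 * oW r r * oW r 1 * (uW r 5)⁻¹ }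

/-- The remaining conjugacy relations of `𝒫₀`: if `r` is even, `o_{1+2j} = o₁o_{2j}o₁` and
`o_{2+2j} = o₂o_{1+2j}o₂` for `j = 1, …, r/2 − 1`; if `r` is odd, `o₃ = o₂o₁o₂` together
with `o_{2+2j} = o₁o_{1+2j}o₁` and `o_{3+2j} = o₂o_{2+2j}o₂` for `j = 1, …, (r−3)/2`. -/
def P0RelsO (r : ℕ) : Set (FreeGroup (P0Gen r)) :=
  if Even r then
    ⋃ j ∈ Finset.Icc 1 (r / 2 - 1),
      ({oW r 1 * oW r (2 * j) * oW r 1 * (oW r (1 + 2 * j))⁻¹,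
        oW r 2 * oW r (1 + 2 * j) * oW r 2 * (oW r (2 + 2 * j))⁻¹} :
          Set (FreeGroup (P0Gen r)))
  else
    {oW r 2 * oW r 1 * oW r 2 * (oW r 3)⁻¹} ∪
    ⋃ j ∈ Finset.Icc 1 ((r - 3) / 2),
      ({oW r 1 * oW r (1 + 2 * j) * oW r 1 * (oW r (2 + 2 * j))⁻¹,
        oW r 2 * oW r (2 + 2 * j) * oW r 2 * (oW r (3 + 2 * j))⁻¹} :
          Set (FreeGroup (P0Gen r)))

/-- All defining relations of `𝒫₀`. -/
def P0Rels (r : ℕ) : Set (FreeGroup (P0Gen r)) := P0RelsSq r ∪ P0RelsU r ∪ P0RelsO r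

/-- The group `𝒫₀`, presented by the above generators and relations. -/
abbrev P0 (r : ℕ) : Type := PresentedGroup (P0Rels r)

/-- The generators `u`, `o` of the group `𝒫 = ⟨u, o | u o u⁻¹ = o^r⟩`. -/
inductive PGen : Type
  | u : PGen
  | o : PGen

/-- The single relation `u o u⁻¹ o^{-r}` of `𝒫`. -/
def PRels (r : ℕ) : Set (FreeGroup PGen) :=
  {FreeGroup.of PGen.u * FreeGroup.of PGen.o * (FreeGroup.of PGen.u)⁻¹ *
    (FreeGroup.of PGen.o ^ r)⁻¹}

/-- The group `𝒫 = ⟨u, o | u o u⁻¹ = o^r⟩`. -/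
abbrev Pgrp (r : ℕ) : Type := PresentedGroup (PRels r)

/-- The relabelled generator-word `a_i` of `𝒫₀`: `a₁ = o₁`, `a₂ = o₂`, `a_{i+2} = u_i`
for `i = 1, …, 5`, and `a_j = o_{j−5}` for `j = 8, …, r+5`. -/
def aW (r : ℕ) (i : ℕ) : FreeGroup (P0Gen r) :=
  if i ≤ 2 then oW r i else if i ≤ 7 then uW r (i - 2) else oW r (i - 5)

/-- `C(r)`: the set of triples `(i,j,k)` such that `a_i a_j a_i = a_k` is one of the
conjugacy relations of `𝒫₀`. -/
def Cset (r : ℕ) : Set (ℕ × ℕ × ℕ) :=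
  {t | aW r t.1 * aW r t.2.1 * aW r t.1 * (aW r t.2.2)⁻¹ ∈ P0RelsU r ∪ P0RelsO r}

/-- The generators of the solution group `Γ`: `a_i, b_i, c_i, d_i, p_{i,1}, …, p_{i,5}`
(`1 ≤ i ≤ r+5`), `f₀, f₁, f₂, g₀, g₁, g₂, m₀, m₁, m₂`, `h_{jk}` and `q_{c,1}, …, q_{c,6}`
(one family for each `c = (i,j,k) ∈ C(r)`), together with the central generator `J`. -/
inductive GaGen (r : ℕ) : Type
  | a : Fin (r + 5) → GaGen r
  | b : Fin (r + 5) → GaGen r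
  | c : Fin (r + 5) → GaGen r
  | d : Fin (r + 5) → GaGen r
  | p : Fin (r + 5) → Fin 5 → GaGen r
  | f : Fin 3 → GaGen r
  | g : Fin 3 → GaGen r
  | m : Fin 3 → GaGen r
  | h : {t : ℕ × ℕ × ℕ // t ∈ Cset r} → GaGen r
  | q : {t : ℕ × ℕ × ℕ // t ∈ Cset r} → Fin 6 → GaGen r
  | J : GaGen r

/-- The free-group letter `a_i` of `Γ` (`1 ≤ i ≤ r+5`; junk value `1` out of range). -/
def ga (r : ℕ) (i : ℕ) : FreeGroup (GaGen r) :=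
  if h : 1 ≤ i ∧ i ≤ r + 5 then FreeGroup.of (GaGen.a ⟨i - 1, by omega⟩) else 1

/-- The free-group letter `b_i` of `Γ`. -/
def gb (r : ℕ) (i : ℕ) : FreeGroup (GaGen r) :=
  if h : 1 ≤ i ∧ i ≤ r + 5 then FreeGroup.of (GaGen.b ⟨i - 1, by omega⟩) else 1

/-- The free-group letter `c_i` of `Γ`. -/
def gc (r : ℕ) (i : ℕ) : FreeGroup (GaGen r) :=
  if h : 1 ≤ i ∧ i ≤ r + 5 then FreeGroup.of (GaGen.c ⟨i - 1, by omega⟩) else 1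

/-- The free-group letter `d_i` of `Γ`. -/
def gd (r : ℕ) (i : ℕ) : FreeGroup (GaGen r) :=
  if h : 1 ≤ i ∧ i ≤ r + 5 then FreeGroup.of (GaGen.d ⟨i - 1, by omega⟩) else 1

/-- The free-group letter `p_{i,l}` of `Γ` (`1 ≤ i ≤ r+5`, `1 ≤ l ≤ 5`). -/
def gp (r : ℕ) (i l : ℕ) : FreeGroup (GaGen r) :=
  if h : (1 ≤ i ∧ i ≤ r + 5) ∧ (1 ≤ l ∧ l ≤ 5) then
    FreeGroup.of (GaGen.p ⟨i - 1, by omega⟩ ⟨l - 1, by omega⟩) else 1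

/-- The free-group letter `f_l` of `Γ` (`0 ≤ l ≤ 2`). -/
def gf (r : ℕ) (l : ℕ) : FreeGroup (GaGen r) :=
  if h : l ≤ 2 then FreeGroup.of (GaGen.f ⟨l, by omega⟩) else 1

/-- The free-group letter `g_l` of `Γ` (`0 ≤ l ≤ 2`). -/
def gg (r : ℕ) (l : ℕ) : FreeGroup (GaGen r) :=
  if h : l ≤ 2 then FreeGroup.of (GaGen.g ⟨l, by omega⟩) else 1

/-- The free-group letter `m_l` of `Γ` (`0 ≤ l ≤ 2`). -/
def gm (r : ℕ) (l : ℕ) : FreeGroup (GaGen r) :=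
  if h : l ≤ 2 then FreeGroup.of (GaGen.m ⟨l, by omega⟩) else 1

/-- The free-group letter `h_{jk}` of `Γ`, for `(i,j,k) ∈ C(r)`. -/
def gh (r : ℕ) (t : {t : ℕ × ℕ × ℕ // t ∈ Cset r}) : FreeGroup (GaGen r) :=
  FreeGroup.of (GaGen.h t)

/-- The free-group letter `q_{c,l}` of `Γ`, for `c ∈ C(r)` and `1 ≤ l ≤ 6`. -/
def gq (r : ℕ) (t : {t : ℕ × ℕ × ℕ // t ∈ Cset r}) (l : ℕ) : FreeGroup (GaGen r) :=
  if h : 1 ≤ l ∧ l ≤ 6 then FreeGroup.of (GaGen.q t ⟨l - 1, by omega⟩) else 1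

/-- The free-group letter `J` of `Γ`. -/
def gJ (r : ℕ) : FreeGroup (GaGen r) := FreeGroup.of GaGen.J

/-- The relators of `Γ` corresponding to the linear equations of the binary linear
system: for each `1 ≤ i ≤ r+5` the relations `a_i = b_i c_i`, `a_i = f₀ d_i`,
`f₀f₁f₂ = e`, `b_i f₂ p_{i,1} = e`, `p_{i,1}p_{i,2}p_{i,3} = e`, `f₀p_{i,3}p_{i,4} = e`,
`c_i p_{i,4} p_{i,5} = e`, `f₁ p_{i,2} p_{i,5} = e`; for each `c = (i,j,k) ∈ C(r)` the
relations `h_{jk} b_j c_k = e`, `d_i q_{c,1} f₂ = e`, `b_j f₂ q_{c,2} = e`,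
`q_{c,2}q_{c,3}q_{c,4} = e`, `d_i q_{c,4} q_{c,5} = e`, `c_k q_{c,5} q_{c,6} = e`,
`q_{c,1} q_{c,3} q_{c,6} = e`; and the Magic Square relations `g₀g₁g₂ = e`,
`m₀m₁m₂ = e`, `f₀g₂m₀ = e`, `f₂g₀m₁ = e`, `f₁g₁m₂ = J`. -/
def GaRelsLin (r : ℕ) : Set (FreeGroup (GaGen r)) :=
  (⋃ i ∈ Finset.Icc 1 (r + 5),
    ({gb r i * gc r i * (ga r i)⁻¹,
      gf r 0 * gd r i * (ga r i)⁻¹,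
      gf r 0 * gf r 1 * gf r 2,
      gb r i * gf r 2 * gp r i 1,
      gp r i 1 * gp r i 2 * gp r i 3,
      gf r 0 * gp r i 3 * gp r i 4,
      gc r i * gp r i 4 * gp r i 5,
      gf r 1 * gp r i 2 * gp r i 5} : Set (FreeGroup (GaGen r)))) ∪
  (⋃ t : {t : ℕ × ℕ × ℕ // t ∈ Cset r},
    ({gh r t * gb r t.1.2.1 * gc r t.1.2.2,
      gd r t.1.1 * gq r t 1 * gf r 2,
      gb r t.1.2.1 * gf r 2 * gq r t 2,
      gq r t 2 * gq r t 3 * gq r t 4,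
      gd r t.1.1 * gq r t 4 * gq r t 5,
      gc r t.1.2.2 * gq r t 5 * gq r t 6,
      gq r t 1 * gq r t 3 * gq r t 6} : Set (FreeGroup (GaGen r)))) ∪
  ({gg r 0 * gg r 1 * gg r 2,
    gm r 0 * gm r 1 * gm r 2,
    gf r 0 * gg r 2 * gm r 0,
    gf r 2 * gg r 0 * gm r 1,
    gf r 1 * gg r 1 * gm r 2 * (gJ r)⁻¹} : Set (FreeGroup (GaGen r)))

/-- All defining relations of `Γ`: `s² = e` for every generator (including `J² = e`),
`J s J s = e` for every generator `s ≠ J`, and the linear relators above. -/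
def GaRels (r : ℕ) : Set (FreeGroup (GaGen r)) :=
  (Set.range fun s : GaGen r => FreeGroup.of s * FreeGroup.of s) ∪
  ((fun s : GaGen r => gJ r * FreeGroup.of s * gJ r * FreeGroup.of s) ''
    {s : GaGen r | s ≠ GaGen.J}) ∪
  GaRelsLin r

/-- The solution group `Γ`, presented by the above generators and relations. -/
abbrev Ga (r : ℕ) : Type := PresentedGroup (GaRels r)


/-!
For elements of a group satisfying the relations of `𝒫₀`, each `o_k` is a reflection
`(o₁ * o₂) ^ e * o₂` in the dihedral group generated by `o₁` and `o₂`; solving for the exponents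
identifies `u₅` with `(o₁ * o₂) ^ r * o₂`. Since `u₁ * u₂` conjugates `o₁` to `u₅` and fixes `o₂`,
it conjugates `o₁ * o₂` to its `r`-th power, which yields a homomorphism from `𝒫`.

In `Γ` the equations in `p_{i,l}` force `f₀` to exchange `b_i` and `c_i`, and those in `q_{c,l}`
force `d_i` to conjugate `b_j` to `c_k`. Hence `a_i = f₀ * d_i` conjugates `a_j = b_j * c_j` to
`a_k = b_k * c_k`, so the `a_i` satisfy the relations of `𝒫₀`.

For injectivity, a permutation representation of the relations of `𝒫₀` on `X` extends to a solution
of the linear system, with `J = 1`, on four copies of `X`. Applied to a representation in which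
`u` and `o` act on a copy of `ℚ` as `x ↦ r * x` and `x ↦ x + 1`, this detects every element of `𝒫`,
because each `g` in `𝒫` satisfies `u ^ m * g = o ^ k * u ^ n` for some `m`, `n`, `k`.
-/

section Conjugation

variable {G : Type*} [Group G]

/-- The relator of a conjugacy relation `x * y * x = z` with an involution `x`; the relators in
`P0RelsU`, `P0RelsO` and `Cset` all have this shape. -/
def conjRelator (x y z : G) : G := x * y * x * z⁻¹

theorem semiconjBy_symm_of_mul_self {x y z : G} (hx : x * x = 1) (h : SemiconjBy x y z) :
    SemiconjBy x z y := by
  simpa only [inv_eq_of_mul_eq_one_left hx] using h.inv_symm_left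

theorem commute_of_mul_self {x y : G} (hx : x * x = 1) (hy : y * y = 1)
    (hxy : x * y * (x * y) = 1) : Commute x y := by
  have h := inv_eq_of_mul_eq_one_left hxy
  rw [mul_inv_rev, inv_eq_of_mul_eq_one_left hx, inv_eq_of_mul_eq_one_left hy] at h
  exact h.symm

theorem semiconjBy_right_unique {x y z z' : G} (h : SemiconjBy x y z) (h' : SemiconjBy x y z') :
    z = z' :=
  mul_right_cancel (h.eq.symm.trans h'.eq)

-- The elements `τ ^ i * s` are the reflections of the dihedral group generated by `s` and `τ`.
theorem semiconjBy_zpow_mul_zpow_mul {s τ : G} (h : SemiconjBy s τ τ⁻¹) (i j : ℤ) :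
    SemiconjBy (τ ^ i * s) (τ ^ j * s) (τ ^ (2 * i - j) * s) := by
  have hs : SemiconjBy s (τ ^ j * s) (τ ^ (-j) * s) := by
    simpa only [inv_zpow'] using (h.zpow_right j).mul_right (Commute.refl s)
  have hτ : SemiconjBy (τ ^ i) (τ ^ (-j) * s) (τ ^ (2 * i - j) * s) := by
    rw [SemiconjBy, mul_assoc _ s, (h.zpow_right i).eq, inv_zpow']
    simp only [← mul_assoc, ← zpow_add]
    ring_nf
  exact hτ.mul_left hs

end Conjugation

section BaumslagSolitar

variable {G : Type*} [Group G] {u o : G} {r : ℤ}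

theorem semiconjBy_pow_zpow (h : SemiconjBy u o (o ^ r)) (m : ℕ) (k : ℤ) :
    SemiconjBy (u ^ m) (o ^ k) (o ^ (r ^ m * k)) := by
  induction m with
  | zero => simp
  | succ m ih =>
    have hu : SemiconjBy u (o ^ (r ^ m * k)) (o ^ (r ^ (m + 1) * k)) := by
      simpa only [← zpow_mul, pow_succ', mul_assoc] using h.zpow_right (r ^ m * k)
    rw [pow_succ']
    exact hu.mul_left ih

theorem exists_pow_mul_eq_zpow_mul_pow (h : SemiconjBy u o (o ^ r)) {g : G}
    (hg : g ∈ Subgroup.closure {u, o}) : ∃ (m n : ℕ) (k : ℤ), u ^ m * g = o ^ k * u ^ n := by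
  have pow_mul_zpow_mul {m n : ℕ} {k : ℤ} {y : G} (l : ℤ) (ih : u ^ m * y = o ^ k * u ^ n) :
      u ^ m * (o ^ l * y) = o ^ (r ^ m * l + k) * u ^ n := by
    rw [← mul_assoc, semiconjBy_pow_zpow h m l, mul_assoc, ih, zpow_add, mul_assoc]
  induction hg using Subgroup.closure_induction_left with
  | one => exact ⟨0, 0, 0, by simp⟩
  | mul_left x hx y _ ih =>
    obtain ⟨m, n, k, ih⟩ := ih
    obtain rfl | rfl := hx
    · have hu : x * o ^ k = o ^ (r * k) * x := by simpa using (semiconjBy_pow_zpow h 1 k).eq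
      exact ⟨m, n + 1, r * k, by
        rw [← mul_assoc, pow_mul_comm', mul_assoc, ih, ← mul_assoc, hu, mul_assoc, pow_succ' x n]⟩
    · exact ⟨m, n, r ^ m * 1 + k, by simpa using pow_mul_zpow_mul 1 ih⟩
  | inv_mul_cancel x hx y _ ih =>
    obtain ⟨m, n, k, ih⟩ := ih
    obtain rfl | rfl := hx
    · exact ⟨m + 1, n, k, by rw [pow_succ, mul_assoc, mul_inv_cancel_left, ih]⟩
    · exact ⟨m, n, r ^ m * (-1) + k, by simpa using pow_mul_zpow_mul (-1) ih⟩

end BaumslagSolitar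

namespace Pgrp

open PresentedGroup

theorem semiconjBy_u_o (r : ℕ) :
    SemiconjBy (of PGen.u : Pgrp r) (of PGen.o) (of PGen.o ^ (r : ℤ)) := by
  have h : of PGen.u * of PGen.o * (of PGen.u)⁻¹ * (of PGen.o ^ r)⁻¹ = (1 : Pgrp r) :=
    one_of_mem (Set.mem_singleton _)
  rwa [mul_inv_eq_one, mul_inv_eq_iff_eq_mul, ← zpow_natCast] at h

theorem closure_u_o (r : ℕ) : Subgroup.closure {(of PGen.u : Pgrp r), of PGen.o} = ⊤ := by
  refine top_le_iff.1 ((closure_range_of (PRels r)).ge.trans (Subgroup.closure_mono ?_))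
  rintro _ ⟨_ | _, rfl⟩ <;> simp

theorem injective_of_affine {r : ℕ} (hr : 2 ≤ r) {X : Type*} (φ : Pgrp r →* Equiv.Perm X)
    {ι : ℚ → X} (hι : Function.Injective ι) (hu : ∀ x, φ (of PGen.u) (ι x) = ι (r * x))
    (ho : ∀ x, φ (of PGen.o) (ι x) = ι (x + 1)) : Function.Injective φ := by
  have hu_pow (n : ℕ) (x : ℚ) : φ (of PGen.u ^ n) (ι x) = ι (r ^ n * x) := by
    induction n with
    | zero => simp
    | succ n ih => rw [pow_succ', map_mul, Equiv.Perm.mul_apply, ih, hu, pow_succ', mul_assoc]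
  have ho_zpow (k : ℤ) (x : ℚ) : φ (of PGen.o ^ k) (ι x) = ι (x + k) := by
    induction k with
    | zero => simp
    | succ k ih =>
      rw [add_comm, zpow_one_add, map_mul, Equiv.Perm.mul_apply, ih, ho]
      push_cast
      ring_nf
    | pred k ih =>
      rw [sub_eq_neg_add, zpow_add, zpow_neg_one, map_mul, Equiv.Perm.mul_apply, ih, map_inv,
        Equiv.Perm.inv_eq_iff_eq, ho]
      push_cast
      ring_nf
  refine (injective_iff_map_eq_one φ).2 fun g hg => ?_
  obtain ⟨m, n, k, hmnk⟩ := exists_pow_mul_eq_zpow_mul_pow (semiconjBy_u_o r)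
    (closure_u_o r ▸ Subgroup.mem_top g)
  have haction (x : ℚ) : (r : ℚ) ^ m * x = r ^ n * x + k := by
    apply hι
    rw [← hu_pow, ← ho_zpow, ← hu_pow, ← Equiv.Perm.mul_apply, ← map_mul, ← hmnk, map_mul, hg,
      mul_one]
  have hk : k = 0 := by simpa [eq_comm] using haction 0
  have hpow : (r : ℚ) ^ m = r ^ n := by simpa [hk] using haction 1
  have hmn : m = n := Nat.pow_right_injective hr (mod_cast hpow)
  simpa [hk, hmn] using hmnk

end Pgrp

section FreeGroupWords

variable {α : Type*}

theorem eq_of_mk_eq_mk_of_isReduced {L₁ L₂ : List (α × Bool)} (hL₁ : FreeGroup.IsReduced L₁)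
    (hlen : L₂.length ≤ L₁.length) (h : FreeGroup.mk L₁ = FreeGroup.mk L₂) : L₁ = L₂ := by
  classical
  have hred : L₁ = FreeGroup.reduce L₂ := hL₁.reduce_eq.symm.trans (FreeGroup.reduce.sound h)
  exact (hred ▸ FreeGroup.reduce.red.sublist : L₁.Sublist L₂).eq_of_length_le hlen

theorem eq_of_conjRelator_eq_conjRelator_of {x y z : α} (hxz : x ≠ z)
    {l₁ l₂ l₃ : List (α × Bool)} (h₁ : l₁.length ≤ 1) (h₂ : l₂.length ≤ 1) (h₃ : l₃.length ≤ 1)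
    (h : conjRelator (.of x) (.of y) (.of z) =
      conjRelator (FreeGroup.mk l₁) (FreeGroup.mk l₂) (FreeGroup.mk l₃)) :
    l₁ = [(x, true)] ∧ l₂ = [(y, true)] ∧ l₃ = [(z, true)] := by
  have hwords : [(x, true), (y, true), (x, true), (z, false)] =
      l₁ ++ l₂ ++ l₁ ++ FreeGroup.invRev l₃ := by
    refine eq_of_mk_eq_mk_of_isReduced (by simp [FreeGroup.IsReduced, hxz]) ?_ h
    simp only [List.length_append, FreeGroup.invRev_length, List.length_cons, List.length_nil]
    omega
  have hlen := congr(List.length $hwords)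
  simp only [List.length_append, FreeGroup.invRev_length, List.length_cons, List.length_nil] at hlen
  obtain ⟨a, rfl⟩ := List.length_eq_one_iff.1 (by omega : l₁.length = 1)
  obtain ⟨b, rfl⟩ := List.length_eq_one_iff.1 (by omega : l₂.length = 1)
  obtain ⟨c, rfl⟩ := List.length_eq_one_iff.1 (by omega : l₃.length = 1)
  simp_all [FreeGroup.invRev, Prod.ext_iff]

end FreeGroupWords

section Labels

variable {r : ℕ}

/-- The index `i` with `a_i = o_k`. -/
def oLabel (k : ℕ) : ℕ := if k ≤ 2 then k else k + 5

theorem oLabel_injective : Function.Injective oLabel := by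
  intro k l
  grind [oLabel]

theorem aW_oLabel (r k : ℕ) : aW r (oLabel k) = oW r k := by
  grind [aW, oLabel]

/-- The index `i` with `a_i = s`, for a generator `s` of `𝒫₀`. -/
def P0Gen.label : P0Gen r → ℕ
  | .o k => oLabel (k + 1)
  | .u k => k + 3

theorem P0Gen.label_mem_Icc (hr : 2 ≤ r) (s : P0Gen r) : s.label ∈ Finset.Icc 1 (r + 5) := by
  rw [Finset.mem_Icc]
  cases s <;> grind [P0Gen.label, oLabel]

theorem P0Gen.exists_label_eq (hr : 2 ≤ r) {i : ℕ} (hi : i ∈ Finset.Icc 1 (r + 5)) :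
    ∃ s : P0Gen r, s.label = i := by
  rw [Finset.mem_Icc] at hi
  obtain h | h | h : i ≤ 2 ∨ 3 ≤ i ∧ i ≤ 7 ∨ 8 ≤ i := by omega
  · exact ⟨.o ⟨i - 1, by omega⟩, by grind [P0Gen.label, oLabel]⟩
  · exact ⟨.u ⟨i - 3, by omega⟩, by grind [P0Gen.label]⟩
  · exact ⟨.o ⟨i - 6, by omega⟩, by grind [P0Gen.label, oLabel]⟩

theorem oW_succ (k : Fin r) : oW r (k + 1) = .of (.o k) := by
  grind [oW]

theorem aW_label (s : P0Gen r) : aW r s.label = .of s := by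
  cases s with
  | o k => rw [P0Gen.label, aW_oLabel, oW_succ]
  | u k => grind [P0Gen.label, aW, uW]

theorem aW_eq_one_of_notMem (hr : 2 ≤ r) {i : ℕ} (hi : i ∉ Finset.Icc 1 (r + 5)) :
    aW r i = 1 := by
  grind [aW, oW, uW]

theorem aW_eq_of_iff (hr : 2 ≤ r) {i : ℕ} {s : P0Gen r} : aW r i = .of s ↔ s.label = i := by
  refine ⟨fun h => ?_, fun h => h ▸ aW_label s⟩
  by_cases hi : i ∈ Finset.Icc 1 (r + 5)
  · obtain ⟨t, rfl⟩ := P0Gen.exists_label_eq hr hi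
    rw [FreeGroup.of_injective ((aW_label t).symm.trans h)]
  · exact absurd (h.symm.trans (aW_eq_one_of_notMem hr hi)) (FreeGroup.of_ne_one s)

theorem exists_aW_eq_mk (hr : 2 ≤ r) (i : ℕ) :
    ∃ l : List (P0Gen r × Bool), aW r i = .mk l ∧ l.length ≤ 1 := by
  by_cases hi : i ∈ Finset.Icc 1 (r + 5)
  · obtain ⟨s, rfl⟩ := P0Gen.exists_label_eq hr hi
    exact ⟨[(s, true)], aW_label s, le_rfl⟩
  · exact ⟨[], aW_eq_one_of_notMem hr hi, Nat.zero_le 1⟩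

/-- The relator attached to a triple in the definition of `Cset`. -/
def relWord (r : ℕ) (t : ℕ × ℕ × ℕ) : FreeGroup (P0Gen r) :=
  conjRelator (aW r t.1) (aW r t.2.1) (aW r t.2.2)

theorem eq_of_relWord_eq (hr : 2 ≤ r) {x y z : P0Gen r} (hxz : x ≠ z) {t : ℕ × ℕ × ℕ}
    (h : relWord r (x.label, y.label, z.label) = relWord r t) :
    (x.label, y.label, z.label) = t := by
  obtain ⟨i, j, k⟩ := t
  obtain ⟨l₁, e₁, h₁⟩ := exists_aW_eq_mk hr i
  obtain ⟨l₂, e₂, h₂⟩ := exists_aW_eq_mk hr j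
  obtain ⟨l₃, e₃, h₃⟩ := exists_aW_eq_mk hr k
  simp only [relWord, aW_label, e₁, e₂, e₃] at h
  obtain ⟨rfl, rfl, rfl⟩ := eq_of_conjRelator_eq_conjRelator_of hxz h₁ h₂ h₃ h
  rw [(aW_eq_of_iff hr).1 e₁, (aW_eq_of_iff hr).1 e₂, (aW_eq_of_iff hr).1 e₃]

end Labels

section Triples

variable {r : ℕ}

/-- The conjugacy relation of `P0RelsO` with right-hand side `o_k`, for `3 ≤ k ≤ r`, reads
`o_k = o_i * o_j * o_i` with `i = conjIdx r k` and `j = prevIdx r k`. -/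
def conjIdx (r k : ℕ) : ℕ := if k % 2 = r % 2 then 2 else 1

/-- See `conjIdx`. -/
def prevIdx (r k : ℕ) : ℕ := if k = 3 ∧ r % 2 = 1 then 1 else k - 1

theorem mem_P0RelsO_iff (hr : 2 ≤ r) {w : FreeGroup (P0Gen r)} :
    w ∈ P0RelsO r ↔ ∃ k ∈ Finset.Icc 3 r,
      conjRelator (oW r (conjIdx r k)) (oW r (prevIdx r k)) (oW r k) = w := by
  simp only [P0RelsO, conjRelator, Finset.mem_Icc]
  split_ifs with hpar
  · have hpar' := Nat.even_iff.1 hpar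
    simp only [Set.mem_iUnion, Set.mem_insert_iff, Set.mem_singleton_iff]
    constructor
    · rintro ⟨j, hj, rfl | rfl⟩
      · exact ⟨1 + 2 * j, by omega, by grind [conjIdx, prevIdx]⟩
      · exact ⟨2 + 2 * j, by omega, by grind [conjIdx, prevIdx]⟩
    · rintro ⟨k, hk, rfl⟩
      exact ⟨(k - 1) / 2, by grind [conjIdx, prevIdx]⟩
  · have hpar' := Nat.not_even_iff.1 hpar
    simp only [Set.mem_union, Set.mem_iUnion, Set.mem_insert_iff, Set.mem_singleton_iff]
    constructor
    · rintro (rfl | ⟨j, hj, rfl | rfl⟩)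
      · exact ⟨3, by omega, by grind [conjIdx, prevIdx]⟩
      · exact ⟨2 + 2 * j, by omega, by grind [conjIdx, prevIdx]⟩
      · exact ⟨3 + 2 * j, by omega, by grind [conjIdx, prevIdx]⟩
    · rintro ⟨k, hk, rfl⟩
      obtain rfl | hk' := eq_or_ne k 3
      · left; grind [conjIdx, prevIdx]
      · exact .inr ⟨(k - 2) / 2, by grind [conjIdx, prevIdx]⟩

/-- The five members of `Cset r` that come from `P0RelsU r`. -/
def uTriples (r : ℕ) : Finset (ℕ × ℕ × ℕ) :=
  {(4, 1, 5), (4, 2, 6), (3, 5, 7), (3, 6, 2), (1, oLabel r, 7)}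

/-- The member of `Cset r` that comes from the relation with right-hand side `o_k`. -/
def oTriple (r k : ℕ) : ℕ × ℕ × ℕ :=
  (oLabel (conjIdx r k), oLabel (prevIdx r k), oLabel k)

/-- An enumeration of `Cset r`. -/
def conjTriples (r : ℕ) : Finset (ℕ × ℕ × ℕ) :=
  uTriples r ∪ (Finset.Icc 3 r).image (oTriple r)

theorem card_conjTriples (hr : 2 ≤ r) : (conjTriples r).card = r + 3 := by
  have hdisj : Disjoint (uTriples r) ((Finset.Icc 3 r).image (oTriple r)) := by
    rw [Finset.disjoint_left]
    intro t ht ht'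
    obtain ⟨k, hk, rfl⟩ := Finset.mem_image.1 ht'
    have hu : ∀ t ∈ uTriples r, t.2.2 ≤ 7 := by simp [uTriples]
    have ho : 7 < (oTriple r k).2.2 := by grind [oTriple, oLabel]
    exact ho.not_ge (hu _ ht)
  have hu : (uTriples r).card = 5 := by simp [uTriples]
  have hinj : Function.Injective (oTriple r) := fun k l h =>
    oLabel_injective congr($h.2.2)
  rw [conjTriples, Finset.card_union_of_disjoint hdisj, Finset.card_image_of_injective _ hinj,
    Nat.card_Icc, hu]
  omega

theorem exists_label_of_mem_conjTriples (hr : 2 ≤ r) {t : ℕ × ℕ × ℕ} (ht : t ∈ conjTriples r) :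
    ∃ x y z : P0Gen r, x ≠ z ∧ t = (x.label, y.label, z.label) := by
  obtain ⟨i, j, k⟩ := t
  have h : i ∈ Finset.Icc 1 (r + 5) ∧ j ∈ Finset.Icc 1 (r + 5) ∧ k ∈ Finset.Icc 1 (r + 5) ∧
      i ≠ k := by
    simp only [conjTriples, uTriples, oTriple, Finset.mem_union, Finset.mem_image,
      Finset.mem_insert, Finset.mem_singleton, Prod.mk.injEq, Finset.mem_Icc] at ht ⊢
    obtain (h | h | h | h | h) | ⟨l, hl, h⟩ := ht
    all_goals grind [oLabel, conjIdx, prevIdx]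
  obtain ⟨hi, hj, hk, hik⟩ := h
  obtain ⟨x, rfl⟩ := P0Gen.exists_label_eq hr hi
  obtain ⟨y, rfl⟩ := P0Gen.exists_label_eq hr hj
  obtain ⟨z, rfl⟩ := P0Gen.exists_label_eq hr hk
  exact ⟨x, y, z, fun h => hik (congrArg _ h), rfl⟩

theorem P0RelsU_union_P0RelsO_eq_image (hr : 2 ≤ r) :
    P0RelsU r ∪ P0RelsO r = relWord r '' (conjTriples r) := by
  ext w
  simp only [conjTriples, Finset.coe_union, Set.image_union, Finset.coe_image, Set.mem_union]
  refine or_congr ?_ ?_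
  · simp only [relWord, uTriples, Finset.coe_insert, Finset.coe_singleton, Set.image_insert_eq,
      Set.image_singleton, aW_oLabel, Set.mem_insert_iff, Set.mem_singleton_iff]
    simp [P0RelsU, conjRelator, aW]
  · simp [mem_P0RelsO_iff hr, relWord, oTriple, aW_oLabel]

theorem Cset_eq_conjTriples (hr : 2 ≤ r) : Cset r = conjTriples r := by
  ext t
  have hmem : t ∈ Cset r ↔ ∃ t' ∈ conjTriples r, relWord r t' = relWord r t :=
    Set.ext_iff.1 (P0RelsU_union_P0RelsO_eq_image hr) (relWord r t)
  refine hmem.trans ⟨?_, fun ht => ⟨t, ht, rfl⟩⟩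
  rintro ⟨t', ht', h⟩
  obtain ⟨x, y, z, hxz, rfl⟩ := exists_label_of_mem_conjTriples hr ht'
  exact eq_of_relWord_eq hr hxz h ▸ ht'

end Triples

section ConjSystem

variable {r : ℕ} {G : Type*} [Group G] {A : ℕ → G}

/-- The elements `A 1, …, A (r + 5)` satisfy the defining relations of `𝒫₀` in its relabelled
generators `a₁, …, a_{r+5}`. The values of `A` at other indices are junk involutions. -/
structure IsConjSystem (r : ℕ) (A : ℕ → G) : Prop where
  mul_self : ∀ i, A i * A i = 1
  semiconjBy : ∀ t ∈ Cset r, SemiconjBy (A t.1) (A t.2.1) (A t.2.2)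

/-- The exponent `e` with `o_k = (o₁ * o₂) ^ e * o₂`. -/
def reflExp (r k : ℕ) : ℤ := if k ≤ 2 ∨ k % 2 = r % 2 then 2 - k else k - 1

theorem reflExp_self (r : ℕ) : reflExp r r = 2 - r := by
  simp [reflExp]

theorem reflExp_eq_two_mul_sub {k : ℕ} (hk : 3 ≤ k) :
    reflExp r k = 2 * reflExp r (conjIdx r k) - reflExp r (prevIdx r k) := by
  grind [reflExp, conjIdx, prevIdx]

theorem mem_Cset_of_mem_uTriples (hr : 2 ≤ r) {t : ℕ × ℕ × ℕ} (ht : t ∈ uTriples r) :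
    t ∈ Cset r := by
  rw [Cset_eq_conjTriples hr]
  exact Finset.mem_union_left _ ht

theorem oTriple_mem_Cset (hr : 2 ≤ r) {k : ℕ} (hk : k ∈ Finset.Icc 3 r) :
    oTriple r k ∈ Cset r := by
  rw [Cset_eq_conjTriples hr]
  exact Finset.mem_union_right _ (Finset.mem_image_of_mem _ hk)

namespace IsConjSystem

theorem semiconjBy_two (hA : IsConjSystem r A) :
    SemiconjBy (A 2) (A 1 * A 2) (A 1 * A 2)⁻¹ := by
  rw [SemiconjBy, mul_inv_rev, inv_eq_of_mul_eq_one_left (hA.mul_self 1),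
    inv_eq_of_mul_eq_one_left (hA.mul_self 2), mul_assoc]

theorem semiconjBy_reflection (hA : IsConjSystem r A) (i j : ℤ) :
    SemiconjBy ((A 1 * A 2) ^ i * A 2) ((A 1 * A 2) ^ j * A 2)
      ((A 1 * A 2) ^ (2 * i - j) * A 2) :=
  semiconjBy_zpow_mul_zpow_mul hA.semiconjBy_two i j

theorem one_eq_reflection (hA : IsConjSystem r A) : A 1 = (A 1 * A 2) ^ (1 : ℤ) * A 2 := by
  rw [zpow_one, mul_assoc, hA.mul_self, mul_one]

theorem oLabel_eq_reflection (hr : 2 ≤ r) (hA : IsConjSystem r A) {k : ℕ}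
    (hk : k ∈ Finset.Icc 1 r) : A (oLabel k) = (A 1 * A 2) ^ reflExp r k * A 2 := by
  induction k using Nat.strong_induction_on with
  | _ k ih =>
    obtain rfl | rfl | hk₃ : k = 1 ∨ k = 2 ∨ 3 ≤ k := by grind
    · exact hA.one_eq_reflection
    · simp [reflExp, oLabel]
    · have hconj := ih (conjIdx r k) (by grind [conjIdx]) (by grind [conjIdx])
      have hprev := ih (prevIdx r k) (by grind [prevIdx]) (by grind [prevIdx])
      have hrel := hA.semiconjBy _ (oTriple_mem_Cset hr (k := k) (by grind))
      simp only [oTriple, hconj, hprev] at hrel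
      rw [semiconjBy_right_unique hrel (hA.semiconjBy_reflection _ _),
        ← reflExp_eq_two_mul_sub hk₃]

theorem seven_eq_reflection (hr : 2 ≤ r) (hA : IsConjSystem r A) :
    A 7 = (A 1 * A 2) ^ (r : ℤ) * A 2 := by
  have hrel := hA.semiconjBy (1, oLabel r, 7) (mem_Cset_of_mem_uTriples hr (by simp [uTriples]))
  simp only [hA.oLabel_eq_reflection hr (by grind : r ∈ Finset.Icc 1 r)] at hrel
  have hrefl := hA.semiconjBy_reflection 1 (reflExp r r)
  rw [← hA.one_eq_reflection] at hrefl
  rw [semiconjBy_right_unique hrel hrefl, reflExp_self]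
  ring_nf

theorem semiconjBy_zpow (hr : 2 ≤ r) (hA : IsConjSystem r A) :
    SemiconjBy (A 3 * A 4) (A 1 * A 2) ((A 1 * A 2) ^ (r : ℤ)) := by
  have hrel (t : ℕ × ℕ × ℕ) (ht : t ∈ uTriples r) : SemiconjBy (A t.1) (A t.2.1) (A t.2.2) :=
    hA.semiconjBy t (mem_Cset_of_mem_uTriples hr ht)
  have h₁ : SemiconjBy (A 3 * A 4) (A 1) (A 7) :=
    (hrel (3, 5, 7) (by simp [uTriples])).mul_left (hrel (4, 1, 5) (by simp [uTriples]))
  have h₂ : SemiconjBy (A 3 * A 4) (A 2) (A 2) :=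
    (hrel (3, 6, 2) (by simp [uTriples])).mul_left (hrel (4, 2, 6) (by simp [uTriples]))
  simpa only [hA.seven_eq_reflection hr, mul_assoc, hA.mul_self, mul_one] using h₁.mul_right h₂

/-- The homomorphism `u ↦ a₃ * a₄`, `o ↦ a₁ * a₂` out of `𝒫`. -/
def lift (hr : 2 ≤ r) (hA : IsConjSystem r A) : Pgrp r →* G :=
  PresentedGroup.toGroup (f := fun | .u => A 3 * A 4 | .o => A 1 * A 2) <| by
    rintro _ rfl
    simp only [map_mul, map_inv, map_pow, FreeGroup.lift_apply_of]
    rw [mul_inv_eq_one, mul_inv_eq_iff_eq_mul, ← zpow_natCast]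
    exact (hA.semiconjBy_zpow hr).eq

theorem lift_u (hr : 2 ≤ r) (hA : IsConjSystem r A) :
    hA.lift hr (.of PGen.u) = A 3 * A 4 :=
  PresentedGroup.toGroup.of _

theorem lift_o (hr : 2 ≤ r) (hA : IsConjSystem r A) :
    hA.lift hr (.of PGen.o) = A 1 * A 2 :=
  PresentedGroup.toGroup.of _

end IsConjSystem

end ConjSystem

section AffineSystem

open Equiv

/-- Permutations of two copies of `ℚ` satisfying the relations of `𝒫₀`. On the first copy
`a₁ * a₂` is the translation `x ↦ x + 1` and `a₃ * a₄` is the dilation `x ↦ r * x`; the second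
copy serves to write this dilation as a product of two involutions. -/
def affineSystem (r : ℕ) [NeZero r] : ℕ → Perm (ℚ ⊕ ℚ)
  | 3 => sumCongr (Equiv.mulLeft₀ (r : ℚ) (NeZero.ne _)) (Equiv.mulLeft₀ (r : ℚ) (NeZero.ne _))⁻¹ *
      sumComm ℚ ℚ
  | 4 => sumComm ℚ ℚ
  | 5 => sumCongr 1 (Equiv.subLeft 1)
  | 6 => sumCongr 1 (Equiv.subLeft 0)
  | 7 => sumCongr (Equiv.subLeft (r : ℚ)) 1
  | i => sumCongr (Equiv.subLeft (reflExp r (if i ≤ 2 then i else i - 5) : ℚ)) 1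

variable {r : ℕ} [NeZero r]

theorem semiconjBy_sumCongr_subLeft {R : Type*} [CommRing R] (a b : R) :
    SemiconjBy (sumCongr (Equiv.subLeft a) 1 : Perm (R ⊕ R)) (sumCongr (Equiv.subLeft b) 1)
      (sumCongr (Equiv.subLeft (2 * a - b)) 1) := by
  ext (x | x)
  · refine congrArg Sum.inl (?_ : a - (b - x) = 2 * a - b - (a - x))
    ring
  · rfl

theorem affineSystem_oLabel :
    ∀ k, affineSystem r (oLabel k) = sumCongr (Equiv.subLeft (reflExp r k : ℚ)) 1
  | 0 | 1 | 2 => rfl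
  | k + 3 => by simp [oLabel, affineSystem]

theorem isConjSystem_affineSystem (hr : 2 ≤ r) : IsConjSystem r (affineSystem r) where
  mul_self i := by
    unfold affineSystem
    split <;> ext (x | x) <;> simp [NeZero.ne]
  semiconjBy t ht := by
    rw [Cset_eq_conjTriples hr, conjTriples, Finset.coe_union] at ht
    obtain ht | ht := ht
    · simp only [uTriples, Finset.coe_insert, Set.mem_insert_iff, Finset.coe_singleton,
        Set.mem_singleton_iff] at ht
      obtain rfl | rfl | rfl | rfl | rfl := ht
      · ext (x | x) <;> simp [affineSystem, reflExp]
      · ext (x | x) <;> simp [affineSystem, reflExp]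
      · ext (x | x) <;> simp [affineSystem, mul_sub]
      · ext (x | x) <;> simp [affineSystem, reflExp]
      · simp only [affineSystem_oLabel]
        simpa [affineSystem, reflExp] using semiconjBy_sumCongr_subLeft (1 : ℚ) (2 - r)
    · obtain ⟨k, hk, rfl⟩ := Finset.mem_image.1 (Finset.mem_coe.1 ht)
      simpa [oTriple, affineSystem_oLabel, reflExp_eq_two_mul_sub (Finset.mem_Icc.1 hk).1] using
        semiconjBy_sumCongr_subLeft (reflExp r (conjIdx r k) : ℚ) (reflExp r (prevIdx r k))

end AffineSystem

section ConjGadget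

variable {G : Type*} [Group G]

/-- The equations by which `Γ` forces the involution `x` to conjugate `b` to `c`, with auxiliary
variables `p`. They occur once for each `1 ≤ i ≤ r + 5`, with `x = f₀`, and once for each element
of `Cset r`, with `x = d_i`. -/
structure ConjGadget (x y z b c : G) (p : Fin 5 → G) : Prop where
  xyz : x * y * z = 1
  bzp : b * z * p 0 = 1
  ppp : p 0 * p 1 * p 2 = 1
  xpp : x * p 2 * p 3 = 1
  cpp : c * p 3 * p 4 = 1
  ypp : y * p 1 * p 4 = 1

theorem mul_eq_of_mul_mul_eq_one {u v w : G} (hw : w * w = 1) (h : u * v * w = 1) : u * v = w := by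
  rw [eq_inv_of_mul_eq_one_left h, inv_eq_of_mul_eq_one_left hw]

theorem ConjGadget.semiconjBy {x y z b c : G} {p : Fin 5 → G} (h : ConjGadget x y z b c p)
    (hx : x * x = 1) (hy : y * y = 1) (hz : z * z = 1) (hb : b * b = 1)
    (hp : ∀ l, p l * p l = 1) : SemiconjBy x b c := by
  have hzy : z * y = x := by
    rw [eq_inv_of_mul_eq_one_left ((mul_assoc x y z).symm.trans h.xyz), mul_inv_rev,
      inv_eq_of_mul_eq_one_left hy, inv_eq_of_mul_eq_one_left hz]
  have hp₁ : p 1 = y * p 4 := by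
    rw [← mul_eq_of_mul_mul_eq_one (hp 4) h.ypp, ← mul_assoc, hy, one_mul]
  have hloop : p 2 = b * (x * c * x) * p 2 := calc
    p 2 = p 0 * p 1 := (mul_eq_of_mul_mul_eq_one (hp 2) h.ppp).symm
    _ = b * (z * y) * p 4 := by
      rw [← mul_eq_of_mul_mul_eq_one (hp 0) h.bzp, hp₁]; simp only [mul_assoc]
    _ = b * x * (c * (x * p 2)) := by
      rw [hzy, mul_eq_of_mul_mul_eq_one (hp 3) h.xpp, mul_eq_of_mul_mul_eq_one (hp 4) h.cpp]
    _ = b * (x * c * x) * p 2 := by simp only [mul_assoc]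
  have hxcx : x * c * x = b := by
    rw [eq_inv_of_mul_eq_one_right (right_eq_mul.1 hloop), inv_eq_of_mul_eq_one_left hb]
  refine semiconjBy_symm_of_mul_self hx ?_
  rw [SemiconjBy, ← hxcx, mul_assoc, hx, mul_one]

end ConjGadget

section DoubledPermutations

open Equiv

variable {X : Type*}

/-- The permutation acting as `w` on both copies of `X`. -/
def double (w : Perm X) : Perm (X ⊕ X) := Perm.sumCongr w w

/-- The values of `p` in a solution of `ConjGadget`; see `gadgetPerms_spec`. -/
def gadgetPerms (x b c : Perm X) : Fin 5 → Perm (X ⊕ X) :=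
  ![double b * sumComm X X, Perm.sumCongr (x * b) (b * x) * sumComm X X,
    Perm.sumCongr x (x * b * c), Perm.sumCongr 1 (b * c), Perm.sumCongr c b]

theorem sumComm_mul_self : (sumComm X X : Perm (X ⊕ X)) * sumComm X X = 1 := by
  ext (x | x) <;> rfl

theorem sumComm_mul_sumCongr (v w : Perm X) :
    (sumComm X X : Perm (X ⊕ X)) * Perm.sumCongr v w = Perm.sumCongr w v * sumComm X X := by
  ext (x | x) <;> rfl

theorem double_mul (v w : Perm X) : double (v * w) = double v * double w := by
  simp [double, Perm.sumCongr_mul]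

theorem double_mul_self {w : Perm X} (hw : w * w = 1) : double w * double w = 1 := by
  rw [← double_mul, hw, double, Perm.sumCongr_one]

theorem gadgetPerms_spec {x b c : Perm X} (hx : x * x = 1) (hb : b * b = 1) (hc : c * c = 1)
    (hbc : Commute b c) (h : SemiconjBy x b c) :
    ConjGadget (double x) (double x * sumComm X X) (sumComm X X) (double b) (double c)
      (gadgetPerms x b c) ∧ ∀ l, gadgetPerms x b c l * gadgetPerms x b c l = 1 := by
  have hbx : b * x = x * c := (semiconjBy_symm_of_mul_self hx h).eq.symm
  have hcancel {w : Perm X} (hw : w * w = 1) (v : Perm X) : w * (w * v) = v := by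
    rw [← mul_assoc, hw, one_mul]
  have hmove {u v v' : Perm X} (huv : u * v = v * v') (w : Perm X) :
      u * (v * w) = v * (v' * w) := by
    rw [← mul_assoc, huv, mul_assoc]
  have hswap (v w : Perm X) (z : Perm (X ⊕ X)) :
      (sumComm X X : Perm (X ⊕ X)) * (Perm.sumCongr v w * z) =
        Perm.sumCongr w v * (sumComm X X * z) := by
    rw [← mul_assoc, sumComm_mul_sumCongr, mul_assoc]
  refine ⟨⟨?_, ?_, ?_, ?_, ?_, ?_⟩, fun l => ?_⟩
  on_goal 7 => fin_cases l
  all_goals simp [gadgetPerms, double, mul_assoc, hswap, sumComm_mul_self, Perm.sumCongr_mul,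
    hx, hb, hc, hcancel hx, hcancel hb, hbx, hmove hbx, hmove h.eq.symm, hbc.eq.symm,
    hmove hbc.eq.symm]

end DoubledPermutations

section Solution

variable {r : ℕ} {G : Type*} [Group G]

/-- `φ` sends the generators of `Γ` to an operator solution of the linear system. The equation
`f₀ * f₁ * f₂ = 1` is part of the first gadget. -/
structure IsSolution (φ : FreeGroup (GaGen r) →* G) : Prop where
  mul_self : ∀ s, φ (.of s) * φ (.of s) = 1
  J_mul : ∀ s ≠ GaGen.J, φ (gJ r) * φ (.of s) * φ (gJ r) * φ (.of s) = 1
  b_mul_c : ∀ i ∈ Finset.Icc 1 (r + 5), φ (gb r i) * φ (gc r i) = φ (ga r i)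
  f_mul_d : ∀ i ∈ Finset.Icc 1 (r + 5), φ (gf r 0) * φ (gd r i) = φ (ga r i)
  gadget_p : ∀ i ∈ Finset.Icc 1 (r + 5), ConjGadget (φ (gf r 0)) (φ (gf r 1)) (φ (gf r 2))
    (φ (gb r i)) (φ (gc r i)) fun l => φ (gp r i (l + 1))
  h_mul : ∀ t : {t // t ∈ Cset r}, φ (gh r t) * φ (gb r t.1.2.1) * φ (gc r t.1.2.2) = 1
  gadget_q : ∀ t : {t // t ∈ Cset r}, ConjGadget (φ (gd r t.1.1)) (φ (gq r t 1)) (φ (gf r 2))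
    (φ (gb r t.1.2.1)) (φ (gc r t.1.2.2)) fun l => φ (gq r t (l + 2))
  g_mul : φ (gg r 0) * φ (gg r 1) * φ (gg r 2) = 1
  m_mul : φ (gm r 0) * φ (gm r 1) * φ (gm r 2) = 1
  f₀_mul : φ (gf r 0) * φ (gg r 2) * φ (gm r 0) = 1
  f₂_mul : φ (gf r 2) * φ (gg r 0) * φ (gm r 1) = 1
  f₁_mul : φ (gf r 1) * φ (gg r 1) * φ (gm r 2) = φ (gJ r)

theorem isSolution_iff {φ : FreeGroup (GaGen r) →* G} :
    IsSolution φ ↔ ∀ w ∈ GaRels r, φ w = 1 := by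
  have forall_index {P : ℕ → Prop} {word : ℕ → FreeGroup (GaGen r)} :
      (∀ w i, P i → w = word i → φ w = 1) ↔ ∀ i, P i → φ (word i) = 1 :=
    ⟨fun h i hi => h _ i hi rfl, fun h w i hi hw => hw ▸ h i hi⟩
  simp only [GaRels, GaRelsLin, Set.mem_union, Set.mem_range, Set.mem_image, Set.mem_ofPred_eq,
    Set.mem_iUnion, Set.mem_insert_iff, Set.mem_singleton_iff, exists_prop, or_imp, forall_and,
    forall_exists_index, and_imp, forall_apply_eq_imp_iff, forall_apply_eq_imp_iff₂,
    forall_eq_apply_imp_iff, forall_index, forall_eq, map_mul, map_inv, mul_inv_eq_one]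
  constructor
  · intro h
    have hp i hi := h.gadget_p i hi
    have hq := h.gadget_q
    exact ⟨⟨h.mul_self, h.J_mul⟩, ⟨⟨h.b_mul_c, h.f_mul_d, fun i hi => (hp i hi).xyz,
      fun i hi => (hp i hi).bzp, fun i hi => (hp i hi).ppp, fun i hi => (hp i hi).xpp,
      fun i hi => (hp i hi).cpp, fun i hi => (hp i hi).ypp⟩, h.h_mul, fun t => (hq t).xyz,
      fun t => (hq t).bzp, fun t => (hq t).ppp, fun t => (hq t).xpp, fun t => (hq t).cpp,
      fun t => (hq t).ypp⟩, h.g_mul, h.m_mul, h.f₀_mul, h.f₂_mul, h.f₁_mul⟩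
  · rintro ⟨⟨hsq, hJ⟩, ⟨⟨hbc, hfd, hp₀, hp₁, hp₂, hp₃, hp₄, hp₅⟩, hh, hq₀, hq₁, hq₂, hq₃, hq₄, hq₅⟩,
      hg, hm, hf₀, hf₂, hf₁⟩
    exact ⟨hsq, hJ, hbc, hfd,
      fun i hi => ⟨hp₀ i hi, hp₁ i hi, hp₂ i hi, hp₃ i hi, hp₄ i hi, hp₅ i hi⟩, hh,
      fun t => ⟨hq₀ t, hq₁ t, hq₂ t, hq₃ t, hq₄ t, hq₅ t⟩, hg, hm, hf₀, hf₂, hf₁⟩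

theorem label_mem_Icc_of_mem_Cset (hr : 2 ≤ r) {t : ℕ × ℕ × ℕ} (ht : t ∈ Cset r) :
    t.1 ∈ Finset.Icc 1 (r + 5) ∧ t.2.1 ∈ Finset.Icc 1 (r + 5) ∧ t.2.2 ∈ Finset.Icc 1 (r + 5) := by
  rw [Cset_eq_conjTriples hr] at ht
  obtain ⟨x, y, z, -, rfl⟩ := exists_label_of_mem_conjTriples hr ht
  exact ⟨x.label_mem_Icc hr, y.label_mem_Icc hr, z.label_mem_Icc hr⟩

namespace IsSolution

variable {φ : FreeGroup (GaGen r) →* G}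

theorem mul_self_dite (h : IsSolution φ) {p : Prop} [Decidable p] (s : p → GaGen r) :
    φ (if hp : p then .of (s hp) else 1) * φ (if hp : p then .of (s hp) else 1) = 1 := by
  split
  · exact h.mul_self _
  · simp

theorem semiconjBy_f (h : IsSolution φ) {i : ℕ} (hi : i ∈ Finset.Icc 1 (r + 5)) :
    SemiconjBy (φ (gf r 0)) (φ (gb r i)) (φ (gc r i)) :=
  (h.gadget_p i hi).semiconjBy (h.mul_self _) (h.mul_self _) (h.mul_self _)
    (h.mul_self_dite _) fun _ => h.mul_self_dite _

theorem semiconjBy_d (h : IsSolution φ) (t : {t // t ∈ Cset r}) :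
    SemiconjBy (φ (gd r t.1.1)) (φ (gb r t.1.2.1)) (φ (gc r t.1.2.2)) :=
  (h.gadget_q t).semiconjBy (h.mul_self_dite _) (h.mul_self_dite _) (h.mul_self_dite _)
    (h.mul_self_dite _) fun _ => h.mul_self_dite _

theorem isConjSystem (hr : 2 ≤ r) (h : IsSolution φ) : IsConjSystem r fun i => φ (ga r i) where
  mul_self _ := h.mul_self_dite _
  semiconjBy t ht := by
    obtain ⟨hi, hj, hk⟩ := label_mem_Icc_of_mem_Cset hr ht
    have hf {i : ℕ} (hi : i ∈ Finset.Icc 1 (r + 5)) :=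
      semiconjBy_symm_of_mul_self (h.mul_self _) (h.semiconjBy_f hi)
    have hd := h.semiconjBy_d ⟨t, ht⟩
    have hcomm : φ (gf r 0) * φ (gd r t.1) = φ (gd r t.1) * φ (gf r 0) := by
      refine commute_of_mul_self (h.mul_self_dite _) (h.mul_self_dite _) ?_
      rw [h.f_mul_d _ hi]
      exact h.mul_self_dite _
    have hb : SemiconjBy (φ (ga r t.1)) (φ (gb r t.2.1)) (φ (gb r t.2.2)) := by
      rw [← h.f_mul_d _ hi]
      exact (hf hk).mul_left hd
    have hc : SemiconjBy (φ (ga r t.1)) (φ (gc r t.2.1)) (φ (gc r t.2.2)) := by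
      rw [← h.f_mul_d _ hi, hcomm]
      exact hd.mul_left (hf hj)
    rw [← h.b_mul_c _ hj, ← h.b_mul_c _ hk]
    exact hb.mul_right hc

end IsSolution

end Solution

section PermSolution

open Equiv

variable {r : ℕ} {X : Type*}

/-- The permutation acting as `w` on the first copy of `X`. -/
def onLeft (w : Perm X) : Perm (X ⊕ X) := Perm.sumCongr w 1

/-- The permutation acting as `w` on the second copy of `X`. -/
def onRight (w : Perm X) : Perm (X ⊕ X) := Perm.sumCongr 1 w

theorem onLeft_mul_onRight (v w : Perm X) : onLeft v * onRight w = Perm.sumCongr v w := by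
  rw [onLeft, onRight, Perm.sumCongr_mul, mul_one, one_mul]

theorem commute_onLeft_onRight (v w : Perm X) : Commute (onLeft v) (onRight w) := by
  rw [Commute, SemiconjBy, onLeft_mul_onRight, onLeft, onRight, Perm.sumCongr_mul, mul_one,
    one_mul]

theorem onLeft_mul_self {w : Perm X} (hw : w * w = 1) : onLeft w * onLeft w = 1 := by
  rw [onLeft, Perm.sumCongr_mul, hw, mul_one, Perm.sumCongr_one]

theorem onRight_mul_self {w : Perm X} (hw : w * w = 1) : onRight w * onRight w = 1 := by
  rw [onRight, Perm.sumCongr_mul, hw, mul_one, Perm.sumCongr_one]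

/-- A solution of the linear system, with `J = 1`, in permutations of four copies of `X`, built
from permutations `A i` of `X` which satisfy the relations of `𝒫₀`. -/
def permSolution (r : ℕ) (A : ℕ → Perm X) : GaGen r → Perm ((X ⊕ X) ⊕ (X ⊕ X))
  | .a i => double (double (A (i + 1)))
  | .b i => double (onLeft (A (i + 1)))
  | .c i => double (onRight (A (i + 1)))
  | .d i => double (sumComm X X * double (A (i + 1)))
  | .p i l => gadgetPerms (sumComm X X) (onLeft (A (i + 1))) (onRight (A (i + 1))) l
  | .f l => ![double (sumComm X X), double (sumComm X X) * sumComm _ _, sumComm _ _] l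
  | .g _ => 1
  | .m l => ![double (sumComm X X), sumComm _ _, double (sumComm X X) * sumComm _ _] l
  | .h t => double (onLeft (A t.1.2.1) * onRight (A t.1.2.2))
  | .q t l => Matrix.vecCons (double (sumComm X X * double (A t.1.1)) * sumComm _ _)
      (gadgetPerms (sumComm X X * double (A t.1.1)) (onLeft (A t.1.2.1)) (onRight (A t.1.2.2))) l
  | .J => 1

theorem sumComm_mul_double (w : Perm X) :
    (sumComm X X : Perm (X ⊕ X)) * double w = double w * sumComm X X :=
  sumComm_mul_sumCongr w w

theorem sumComm_mul_double_mul_self {w : Perm X} (hw : w * w = 1) :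
    sumComm X X * double w * (sumComm X X * double w) = 1 := by
  nth_rw 2 [sumComm_mul_double]
  rw [mul_assoc, ← mul_assoc (double w), double_mul_self hw, one_mul, sumComm_mul_self]

theorem double_mul_sumComm_mul_self {w : Perm X} (hw : w * w = 1) :
    double w * sumComm X X * (double w * sumComm X X) = 1 := by
  rw [← sumComm_mul_double, sumComm_mul_double_mul_self hw]

theorem semiconjBy_sumComm (w : Perm X) :
    SemiconjBy (sumComm X X : Perm (X ⊕ X)) (onLeft w) (onRight w) :=
  sumComm_mul_sumCongr w 1

theorem semiconjBy_sumComm_mul_double {v w w' : Perm X} (h : SemiconjBy v w w') :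
    SemiconjBy (sumComm X X * double v) (onLeft w) (onRight w') := by
  refine (semiconjBy_sumComm w').mul_left ?_
  rw [SemiconjBy, double, onLeft, onLeft, Perm.sumCongr_mul, Perm.sumCongr_mul, h.eq, mul_one,
    one_mul]

theorem gadgetPerms_onLeft_onRight_spec {x : Perm (X ⊕ X)} {b c : Perm X} (hx : x * x = 1)
    (hb : b * b = 1) (hc : c * c = 1) (h : SemiconjBy x (onLeft b) (onRight c)) :
    ConjGadget (double x) (double x * sumComm _ _) (sumComm _ _) (double (onLeft b))
      (double (onRight c)) (gadgetPerms x (onLeft b) (onRight c)) ∧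
      ∀ l, gadgetPerms x (onLeft b) (onRight c) l * gadgetPerms x (onLeft b) (onRight c) l = 1 :=
  gadgetPerms_spec hx (onLeft_mul_self hb) (onRight_mul_self hc) (commute_onLeft_onRight b c) h

theorem permSolution_mul_self {A : ℕ → Perm X} (hA : IsConjSystem r A) (s : GaGen r) :
    permSolution r A s * permSolution r A s = 1 := by
  have hL i := onLeft_mul_self (hA.mul_self i)
  have hR i := onRight_mul_self (hA.mul_self i)
  have hd i := sumComm_mul_double_mul_self (hA.mul_self i)
  have hf := double_mul_self (sumComm_mul_self (X := X))
  have hfz := double_mul_sumComm_mul_self (sumComm_mul_self (X := X))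
  cases s with
  | a i => exact double_mul_self (double_mul_self (hA.mul_self _))
  | b i => exact double_mul_self (hL _)
  | c i => exact double_mul_self (hR _)
  | d i => exact double_mul_self (hd _)
  | p i l =>
    exact (gadgetPerms_onLeft_onRight_spec sumComm_mul_self (hA.mul_self _) (hA.mul_self _)
      (semiconjBy_sumComm _)).2 l
  | f l => fin_cases l <;> first | exact hf | exact hfz | exact sumComm_mul_self
  | g l => exact one_mul 1
  | m l => fin_cases l <;> first | exact hf | exact hfz | exact sumComm_mul_self
  | h t =>
    refine double_mul_self ?_
    rw [(commute_onLeft_onRight _ _).symm.mul_mul_mul_comm, hL, hR, one_mul]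
  | q t l =>
    refine Fin.cases (double_mul_sumComm_mul_self (hd _)) (fun l => ?_) l
    exact (gadgetPerms_onLeft_onRight_spec (hd _) (hA.mul_self _) (hA.mul_self _)
      (semiconjBy_sumComm_mul_double (hA.semiconjBy t t.2))).2 l
  | J => exact one_mul 1

section Letters

variable (A : ℕ → Perm X) {i : ℕ}

theorem lift_permSolution_ga (hi : i ∈ Finset.Icc 1 (r + 5)) :
    FreeGroup.lift (permSolution r A) (ga r i) = double (double (A i)) := by
  simp [ga, Finset.mem_Icc.1 hi, permSolution]

theorem lift_permSolution_gb (hi : i ∈ Finset.Icc 1 (r + 5)) :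
    FreeGroup.lift (permSolution r A) (gb r i) = double (onLeft (A i)) := by
  simp [gb, Finset.mem_Icc.1 hi, permSolution]

theorem lift_permSolution_gc (hi : i ∈ Finset.Icc 1 (r + 5)) :
    FreeGroup.lift (permSolution r A) (gc r i) = double (onRight (A i)) := by
  simp [gc, Finset.mem_Icc.1 hi, permSolution]

theorem lift_permSolution_gd (hi : i ∈ Finset.Icc 1 (r + 5)) :
    FreeGroup.lift (permSolution r A) (gd r i) = double (sumComm X X * double (A i)) := by
  simp [gd, Finset.mem_Icc.1 hi, permSolution]

theorem lift_permSolution_gq (t : {t // t ∈ Cset r}) (l : Fin 5) :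
    FreeGroup.lift (permSolution r A) (gq r t (l + 2)) =
      gadgetPerms (sumComm X X * double (A t.1.1)) (onLeft (A t.1.2.1)) (onRight (A t.1.2.2))
        l := by
  fin_cases l <;> simp [gq, permSolution]

end Letters

theorem isSolution_permSolution (hr : 2 ≤ r) {A : ℕ → Perm X} (hA : IsConjSystem r A) :
    IsSolution (FreeGroup.lift (permSolution r A)) where
  mul_self s := by simpa using permSolution_mul_self hA s
  J_mul s _ := by simpa [gJ, permSolution] using permSolution_mul_self hA s
  b_mul_c i hi := by
    rw [lift_permSolution_ga A hi, lift_permSolution_gb A hi, lift_permSolution_gc A hi,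
      ← double_mul, onLeft_mul_onRight, double]
    rfl
  f_mul_d i hi := by
    rw [lift_permSolution_ga A hi, lift_permSolution_gd A hi]
    simp [gf, permSolution, ← double_mul, ← mul_assoc, sumComm_mul_self]
  gadget_p i hi := by
    rw [lift_permSolution_gb A hi, lift_permSolution_gc A hi]
    have hgadget := (gadgetPerms_onLeft_onRight_spec sumComm_mul_self (hA.mul_self i)
      (hA.mul_self i) (semiconjBy_sumComm _)).1
    simpa [gp, gf, permSolution, Finset.mem_Icc.1 hi] using hgadget
  h_mul t := by
    obtain ⟨-, hj, hk⟩ := label_mem_Icc_of_mem_Cset hr t.2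
    rw [lift_permSolution_gb A hj, lift_permSolution_gc A hk, mul_assoc, ← double_mul]
    exact permSolution_mul_self hA (.h t)
  gadget_q t := by
    obtain ⟨hi, hj, hk⟩ := label_mem_Icc_of_mem_Cset hr t.2
    simp only [lift_permSolution_gd A hi, lift_permSolution_gb A hj, lift_permSolution_gc A hk,
      lift_permSolution_gq]
    simpa [gq, gf, permSolution] using (gadgetPerms_onLeft_onRight_spec
      (sumComm_mul_double_mul_self (hA.mul_self _)) (hA.mul_self _) (hA.mul_self _)
      (semiconjBy_sumComm_mul_double (hA.semiconjBy t t.2))).1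
  g_mul := by simp [gg, permSolution]
  m_mul := by
    simpa [gm, permSolution, mul_assoc] using
      double_mul_sumComm_mul_self (sumComm_mul_self (X := X))
  f₀_mul := by simpa [gf, gg, gm, permSolution] using permSolution_mul_self hA (.f 0)
  f₂_mul := by simpa [gf, gg, gm, permSolution] using permSolution_mul_self hA (.f 2)
  f₁_mul := by simpa [gf, gg, gm, gJ, permSolution] using permSolution_mul_self hA (.f 1)

end PermSolution

section Counting

variable {r : ℕ}

theorem card_Cset (hr : 2 ≤ r) : Nat.card (Cset r) = r + 3 := by
  rw [Cset_eq_conjTriples hr, Nat.card_coe_set_eq, Set.ncard_coe_finset, card_conjTriples hr]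

/-- The generators of `Γ` other than `J`, grouped by their index sets. -/
def GaGen.equivSum (r : ℕ) : {s : GaGen r // s ≠ .J} ≃
    (Fin (r + 5) × (Fin 4 ⊕ Fin 5)) ⊕ (Fin 3 × Fin 3) ⊕ (Cset r × Option (Fin 6)) where
  toFun
    | ⟨.a i, _⟩ => .inl (i, .inl 0)
    | ⟨.b i, _⟩ => .inl (i, .inl 1)
    | ⟨.c i, _⟩ => .inl (i, .inl 2)
    | ⟨.d i, _⟩ => .inl (i, .inl 3)
    | ⟨.p i l, _⟩ => .inl (i, .inr l)
    | ⟨.f l, _⟩ => .inr (.inl (0, l))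
    | ⟨.g l, _⟩ => .inr (.inl (1, l))
    | ⟨.m l, _⟩ => .inr (.inl (2, l))
    | ⟨.h t, _⟩ => .inr (.inr (t, none))
    | ⟨.q t l, _⟩ => .inr (.inr (t, some l))
    | ⟨.J, hJ⟩ => absurd rfl hJ
  invFun
    | .inl (i, .inl 0) => ⟨.a i, nofun⟩
    | .inl (i, .inl 1) => ⟨.b i, nofun⟩
    | .inl (i, .inl 2) => ⟨.c i, nofun⟩
    | .inl (i, .inl 3) => ⟨.d i, nofun⟩
    | .inl (i, .inr l) => ⟨.p i l, nofun⟩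
    | .inr (.inl (0, l)) => ⟨.f l, nofun⟩
    | .inr (.inl (1, l)) => ⟨.g l, nofun⟩
    | .inr (.inl (2, l)) => ⟨.m l, nofun⟩
    | .inr (.inr (t, none)) => ⟨.h t, nofun⟩
    | .inr (.inr (t, some l)) => ⟨.q t l, nofun⟩
  left_inv := by
    rintro ⟨_ | _, h⟩
    all_goals first | rfl | exact absurd rfl h
  right_inv := by
    rintro (⟨i, l | l⟩ | ⟨k, l⟩ | ⟨t, _ | l⟩)
    · fin_cases l <;> rfl
    · rfl
    · fin_cases k <;> rfl
    · rfl
    · rfl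

theorem card_gaGen_ne_J (hr : 2 ≤ r) : Nat.card {s : GaGen r // s ≠ .J} = 16 * r + 75 := by
  have : Finite (Cset r) := Nat.finite_of_card_ne_zero (by rw [card_Cset hr]; omega)
  rw [Nat.card_congr (GaGen.equivSum r)]
  simp only [Nat.card_sum, Nat.card_prod, Nat.card_fin, Finite.card_option, card_Cset hr]
  ring

/-- The exponent with which a generator occurs in the relators of `GaRelsLin`: `a_i` and `J` are
the right-hand sides of their equations, hence inverted. -/
def equationSign : GaGen r → Bool
  | .a _ => false
  | .J => false
  | _ => true

/-- The relator of the linear equation with the given variables. -/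
def equationRelator (L : List (GaGen r)) : FreeGroup (GaGen r) :=
  .mk (L.map fun s => (s, equationSign s))

@[simp]
theorem equationRelator_nil : equationRelator ([] : List (GaGen r)) = 1 :=
  rfl

@[simp]
theorem equationRelator_cons (s : GaGen r) (L : List (GaGen r)) :
    equationRelator (s :: L) = cond (equationSign s) (.of s) (.of s)⁻¹ * equationRelator L := by
  cases s <;> rfl

-- Each letter has a fixed exponent, so nothing cancels.
theorem equationRelator_injective : Function.Injective (equationRelator (r := r)) := by
  classical
  have hred (L : List (GaGen r)) : FreeGroup.IsReduced (L.map fun s => (s, equationSign s)) :=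
    (List.isChain_map _).2 (List.pairwise_of_forall fun _ _ h => congrArg equationSign h).isChain
  intro L₁ L₂ h
  have h' := FreeGroup.reduce.sound h
  rw [(hred L₁).reduce_eq, (hred L₂).reduce_eq] at h'
  exact List.map_injective_iff.2 (fun s t hst => congrArg Prod.fst hst) h'

/-- The position of the letter with label `i` among the generators of `Γ` of its kind, with junk
values unless `1 ≤ i ≤ r + 5`. -/
def labelIdx (r i : ℕ) : Fin (r + 5) := Fin.ofNat (r + 5) (i - 1)

/-- The variables of the equations of the linear system, in the order of `GaRelsLin`. The equation
`f₀ * f₁ * f₂ = 1` does not depend on `i` and appears only once. -/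
def equationVars (r : ℕ) : (Fin (r + 5) × Fin 7) ⊕ (Cset r × Fin 7) ⊕ Fin 6 → List (GaGen r)
  | .inl (i, l) => ![[.b i, .c i, .a i], [.f 0, .d i, .a i], [.b i, .f 2, .p i 0],
      [.p i 0, .p i 1, .p i 2], [.f 0, .p i 2, .p i 3], [.c i, .p i 3, .p i 4],
      [.f 1, .p i 1, .p i 4]] l
  | .inr (.inl (t, l)) =>
    let i := labelIdx r t.1.1
    let j := labelIdx r t.1.2.1
    let k := labelIdx r t.1.2.2
    ![[.h t, .b j, .c k], [.d i, .q t 0, .f 2], [.b j, .f 2, .q t 1], [.q t 1, .q t 2, .q t 3],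
      [.d i, .q t 3, .q t 4], [.c k, .q t 4, .q t 5], [.q t 0, .q t 2, .q t 5]] l
  | .inr (.inr l) => ![[.f 0, .f 1, .f 2], [.g 0, .g 1, .g 2], [.m 0, .m 1, .m 2],
      [.f 0, .g 2, .m 0], [.f 2, .g 0, .m 1], [.f 1, .g 1, .m 2, .J]] l

theorem equationVars_injective : Function.Injective (equationVars r) := by
  rintro (⟨i, l⟩ | ⟨t, l⟩ | l) (⟨i', l'⟩ | ⟨t', l'⟩ | l') h
  all_goals fin_cases l <;> fin_cases l' <;> simp_all [equationVars]

@[simp]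
theorem labelIdx_succ (i : Fin (r + 5)) : labelIdx r (i + 1) = i := by
  simp [labelIdx]

@[simp]
theorem ga_succ (i : Fin (r + 5)) : ga r (i + 1) = .of (.a i) :=
  dif_pos ⟨by omega, by omega⟩

@[simp]
theorem gb_succ (i : Fin (r + 5)) : gb r (i + 1) = .of (.b i) :=
  dif_pos ⟨by omega, by omega⟩

@[simp]
theorem gc_succ (i : Fin (r + 5)) : gc r (i + 1) = .of (.c i) :=
  dif_pos ⟨by omega, by omega⟩

@[simp]
theorem gd_succ (i : Fin (r + 5)) : gd r (i + 1) = .of (.d i) :=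
  dif_pos ⟨by omega, by omega⟩

theorem exists_eq_succ_of_mem_Icc {n i : ℕ} (hi : i ∈ Finset.Icc 1 n) : ∃ k : Fin n, i = k + 1 := by
  rw [Finset.mem_Icc] at hi
  exact ⟨⟨i - 1, by omega⟩, (Nat.sub_add_cancel hi.1).symm⟩

theorem exists_labels_eq_succ (hr : 2 ≤ r) {t : ℕ × ℕ × ℕ} (ht : t ∈ Cset r) :
    ∃ i j k : Fin (r + 5), t.1 = i + 1 ∧ t.2.1 = j + 1 ∧ t.2.2 = k + 1 := by
  obtain ⟨hi, hj, hk⟩ := label_mem_Icc_of_mem_Cset hr ht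
  obtain ⟨i, hi⟩ := exists_eq_succ_of_mem_Icc hi
  obtain ⟨j, hj⟩ := exists_eq_succ_of_mem_Icc hj
  obtain ⟨k, hk⟩ := exists_eq_succ_of_mem_Icc hk
  exact ⟨i, j, k, hi, hj, hk⟩

theorem equationRelator_equationVars_inl (i : Fin (r + 5)) (l : Fin 7) :
    equationRelator (equationVars r (.inl (i, l))) =
      ![gb r (i + 1) * gc r (i + 1) * (ga r (i + 1))⁻¹,
        gf r 0 * gd r (i + 1) * (ga r (i + 1))⁻¹,
        gb r (i + 1) * gf r 2 * gp r (i + 1) 1,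
        gp r (i + 1) 1 * gp r (i + 1) 2 * gp r (i + 1) 3,
        gf r 0 * gp r (i + 1) 3 * gp r (i + 1) 4,
        gc r (i + 1) * gp r (i + 1) 4 * gp r (i + 1) 5,
        gf r 1 * gp r (i + 1) 2 * gp r (i + 1) 5] l := by
  fin_cases l <;> simp [equationVars, equationSign, mul_assoc, gp, gf, Fin.is_le]

theorem equationRelator_equationVars_inr_inl (hr : 2 ≤ r) (t : Cset r) (l : Fin 7) :
    equationRelator (equationVars r (.inr (.inl (t, l)))) =
      ![gh r t * gb r t.1.2.1 * gc r t.1.2.2,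
        gd r t.1.1 * gq r t 1 * gf r 2,
        gb r t.1.2.1 * gf r 2 * gq r t 2,
        gq r t 2 * gq r t 3 * gq r t 4,
        gd r t.1.1 * gq r t 4 * gq r t 5,
        gc r t.1.2.2 * gq r t 5 * gq r t 6,
        gq r t 1 * gq r t 3 * gq r t 6] l := by
  obtain ⟨i, j, k, hi, hj, hk⟩ := exists_labels_eq_succ hr t.2
  fin_cases l <;> simp [equationVars, equationSign, mul_assoc, gq, gf, gh, hi, hj, hk]

theorem exists_equationRelator_eq_of_mem (hr : 2 ≤ r) {w : FreeGroup (GaGen r)}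
    (hw : w ∈ GaRelsLin r) : ∃ e, equationRelator (equationVars r e) = w := by
  obtain (h | h) | h := hw
  · obtain ⟨i, hi, h⟩ := Set.mem_iUnion₂.1 h
    obtain ⟨i, rfl⟩ := exists_eq_succ_of_mem_Icc hi
    have hrow := equationRelator_equationVars_inl i
    obtain rfl | rfl | rfl | rfl | rfl | rfl | rfl | rfl := h
    exacts [⟨_, hrow 0⟩, ⟨_, hrow 1⟩, ⟨.inr (.inr 0), rfl⟩, ⟨_, hrow 2⟩, ⟨_, hrow 3⟩, ⟨_, hrow 4⟩,
      ⟨_, hrow 5⟩, ⟨_, hrow 6⟩]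
  · obtain ⟨t, h⟩ := Set.mem_iUnion.1 h
    have hrow := equationRelator_equationVars_inr_inl hr t
    obtain rfl | rfl | rfl | rfl | rfl | rfl | rfl := h
    exacts [⟨_, hrow 0⟩, ⟨_, hrow 1⟩, ⟨_, hrow 2⟩, ⟨_, hrow 3⟩, ⟨_, hrow 4⟩, ⟨_, hrow 5⟩,
      ⟨_, hrow 6⟩]
  · obtain rfl | rfl | rfl | rfl | rfl := h
    exacts [⟨.inr (.inr 1), rfl⟩, ⟨.inr (.inr 2), rfl⟩, ⟨.inr (.inr 3), rfl⟩, ⟨.inr (.inr 4), rfl⟩,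
      ⟨.inr (.inr 5), rfl⟩]

theorem equationRelator_mem (hr : 2 ≤ r) : ∀ e, equationRelator (equationVars r e) ∈ GaRelsLin r
  | .inl (i, l) => by
    refine .inl (.inl (Set.mem_iUnion₂.2 ⟨i + 1, Finset.mem_Icc.2 (by omega), ?_⟩))
    rw [equationRelator_equationVars_inl]
    fin_cases l <;> simp
  | .inr (.inl (t, l)) => by
    refine .inl (.inr (Set.mem_iUnion.2 ⟨t, ?_⟩))
    rw [equationRelator_equationVars_inr_inl hr]
    fin_cases l <;> simp
  | .inr (.inr 0) =>
    .inl (.inl (Set.mem_iUnion₂.2 ⟨1, Finset.mem_Icc.2 (by omega), .inr (.inr (.inl rfl))⟩))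
  | .inr (.inr 1) => .inr (.inl rfl)
  | .inr (.inr 2) => .inr (.inr (.inl rfl))
  | .inr (.inr 3) => .inr (.inr (.inr (.inl rfl)))
  | .inr (.inr 4) => .inr (.inr (.inr (.inr (.inl rfl))))
  | .inr (.inr 5) => .inr (.inr (.inr (.inr (.inr rfl))))

theorem GaRelsLin_eq_range (hr : 2 ≤ r) :
    GaRelsLin r = Set.range (equationRelator ∘ equationVars r) :=
  Set.Subset.antisymm (fun _ => exists_equationRelator_eq_of_mem hr)
    (Set.range_subset_iff.2 (equationRelator_mem hr))

theorem card_GaRelsLin (hr : 2 ≤ r) : Nat.card (GaRelsLin r) = 14 * r + 62 := by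
  have : Finite (Cset r) := Nat.finite_of_card_ne_zero (by rw [card_Cset hr]; omega)
  rw [GaRelsLin_eq_range hr, Nat.card_range_of_injective
    (equationRelator_injective.comp equationVars_injective)]
  simp only [Nat.card_sum, Nat.card_prod, Nat.card_fin, card_Cset hr]
  ring

end Counting

section Embedding

variable {r : ℕ}

theorem isSolution_mk : IsSolution (PresentedGroup.mk (GaRels r)) :=
  isSolution_iff.2 fun _ => PresentedGroup.one_of_mem

/-- The homomorphism `𝒫 → Γ` with `u ↦ a₃ * a₄` and `o ↦ a₁ * a₂`. -/
def Pgrp.toGa (hr : 2 ≤ r) : Pgrp r →* Ga r :=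
  (isSolution_mk.isConjSystem hr).lift hr

theorem Pgrp.toGa_u (hr : 2 ≤ r) :
    toGa hr (.of PGen.u) = PresentedGroup.mk (GaRels r) (ga r 3 * ga r 4) :=
  (IsConjSystem.lift_u hr _).trans (map_mul _ _ _).symm

theorem Pgrp.toGa_o (hr : 2 ≤ r) :
    toGa hr (.of PGen.o) = PresentedGroup.mk (GaRels r) (ga r 1 * ga r 2) :=
  (IsConjSystem.lift_o hr _).trans (map_mul _ _ _).symm

/-- The action of `Γ` on four copies of `X` given by `permSolution`. -/
def Ga.permHom {X : Type*} (hr : 2 ≤ r) {A : ℕ → Equiv.Perm X} (hA : IsConjSystem r A) :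
    Ga r →* Equiv.Perm ((X ⊕ X) ⊕ (X ⊕ X)) :=
  PresentedGroup.toGroup (isSolution_iff.1 (isSolution_permSolution hr hA))

theorem Ga.permHom_mk_ga {X : Type*} (hr : 2 ≤ r) {A : ℕ → Equiv.Perm X} (hA : IsConjSystem r A)
    {i : ℕ} (hi : i ∈ Finset.Icc 1 (r + 5)) :
    permHom hr hA (PresentedGroup.mk (GaRels r) (ga r i)) = double (double (A i)) :=
  lift_permSolution_ga A hi

theorem Pgrp.toGa_injective (hr : 2 ≤ r) : Function.Injective (toGa hr) := by
  have : NeZero r := ⟨by omega⟩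
  let ψ := Ga.permHom hr (isConjSystem_affineSystem hr)
  have hψ {i j : ℕ} (hi : i ∈ Finset.Icc 1 (r + 5)) (hj : j ∈ Finset.Icc 1 (r + 5)) :
      ψ (PresentedGroup.mk (GaRels r) (ga r i * ga r j)) =
        double (double (affineSystem r i * affineSystem r j)) := by
    rw [map_mul, map_mul, Ga.permHom_mk_ga hr _ hi, Ga.permHom_mk_ga hr _ hj, double_mul,
      double_mul]
  have hinj : Function.Injective (ψ.comp (toGa hr)) := by
    refine injective_of_affine hr _ (ι := fun x => .inl (.inl (.inl x)))
      (Sum.inl_injective.comp (Sum.inl_injective.comp Sum.inl_injective)) (fun x => ?_) fun x => ?_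
    · rw [MonoidHom.comp_apply, toGa_u, hψ (by simp) (by simp)]
      simp [double, affineSystem]
    · rw [MonoidHom.comp_apply, toGa_o, hψ (by simp) (by simp)]
      simp [double, affineSystem, reflExp, add_comm]
  exact .of_comp hinj

end Embedding

/-- For every `r ≥ 2`, the group `𝒫 = ⟨u, o | u o u⁻¹ = o^r⟩` embeds
into the solution group `Γ` of a binary linear system with `16r + 75` variables (the
generators other than `J`) and `14r + 62` equations (the linear relators `GaRelsLin`, each
of which involves `3` variables): there is an injective group homomorphism `𝒫 → Γ`
mapping `u` to `a₃a₄` and `o` to `a₁a₂`. -/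
theorem stmt_8 (r : ℕ) (hr : 2 ≤ r) :
    Nat.card {s : GaGen r // s ≠ GaGen.J} = 16 * r + 75 ∧
    Nat.card ↥(GaRelsLin r) = 14 * r + 62 ∧
    ∃ φ : Pgrp r →* Ga r, Function.Injective φ ∧
      φ (PresentedGroup.of PGen.u) = PresentedGroup.mk (GaRels r) (ga r 3 * ga r 4) ∧
      φ (PresentedGroup.of PGen.o) = PresentedGroup.mk (GaRels r) (ga r 1 * ga r 2) :=
  ⟨card_gaGen_ne_J hr, card_GaRelsLin hr, Pgrp.toGa hr, Pgrp.toGa_injective hr, Pgrp.toGa_u hr,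
    Pgrp.toGa_o hr⟩
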